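/- arXiv:1307.4682 — 2 statements merged into one kernel-verified Lean document; each statement's English description precedes it below -/
import Mathlib

section
/- Let p0: P → A, p1: P → B, f: A → C, g: B → C be a lax square of V-categories over a commutative quantale V (i.e. I ≤ C(f(p0 w), g(p1 w)) for all w), and suppose f and p1 are left adjoints, with right adjoints f^r: C → A (so C(f a, c) = A(a, f^r c) for all a,c) and p1^r: B → P (so B(p1 w, b) = P(w, p1^r b) for all w,b). Then the square is exact, i.e. C(f a, g b) = ⋁_w A(a, p0 w) ⊗ B(p1 w, b) for all a,b, if and only if p0 ∘ p1^r is isomorphic to f^r ∘ g, i.e. I ≤ A(p0(p1^r b), f^r(g b)) and I ≤ A(f^r(g b), p0(p1^r b)) for every object b of B. -/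
universe u v w

/-- A category enriched in a commutative quantale `V`:
objects together with `V`-valued homs satisfying the identity and composition axioms. -/
structure VCategory (V : Type u) [CompleteLattice V] [CommMonoid V] where
  Obj : Type v
  hom : Obj → Obj → V
  one_le_hom : ∀ a, (1 : V) ≤ hom a a
  comp_le : ∀ a b c, hom b c * hom a b ≤ hom a c

/-- A `V`-functor is an object assignment which is (hom-)expanding. -/
def IsVFunctor {V : Type u} [CompleteLattice V] [CommMonoid V]
    (A : VCategory.{u, v} V) (B : VCategory.{u, w} V) (f : A.Obj → B.Obj) : Prop :=
  ∀ a a', A.hom a a' ≤ B.hom (f a) (f a')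

/-- A module `R : A ⇸ B`. -/
def IsModule {V : Type u} [CompleteLattice V] [CommMonoid V]
    (A : VCategory.{u, v} V) (B : VCategory.{u, w} V) (R : B.Obj → A.Obj → V) : Prop :=
  ∀ (a a' : A.Obj) (b b' : B.Obj), B.hom b' b * R b a * A.hom a a' ≤ R b' a'

/-- The internal hom of the quantale: `[x,y] = ⋁ {z | x ⊗ z ≤ y}`. -/
def ihom {V : Type u} [CompleteLattice V] [CommMonoid V] (x y : V) : V :=
  sSup {z | x * z ≤ y}

/-- A presheaf on `A`. -/
def IsPresheaf {V : Type u} [CompleteLattice V] [CommMonoid V]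
    (A : VCategory.{u, v} V) (F : A.Obj → V) : Prop :=
  ∀ a a', F a * A.hom a' a ≤ F a'

/-!
By the adjunction `f ⊣ fʳ`, the presheaf `C(f -, g b)` is represented by `fʳ (g b)`. By the
adjunction `p1 ⊣ p1ʳ` and the co-Yoneda lemma, the supremum in the exactness condition is
represented by `p0 (p1ʳ b)`. By the Yoneda lemma, the two presheaves agree if and only if the
representing objects are isomorphic.
-/

universe v₁ v₂ v₃ v₄

theorem isQuantale_of_mul_sSup {V : Type*} [CompleteLattice V] [CommSemigroup V]
    (h : ∀ (x : V) (s : Set V), x * sSup s = ⨆ y ∈ s, x * y) : IsQuantale V where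
  mul_sSup_distrib := h
  sSup_mul_distrib s y := by simp only [mul_comm _ y, h]

namespace VCategory

variable {V : Type u} [CompleteLattice V] [CommMonoid V]

/-- Isomorphism of objects of a `V`-category. Since homs are elements of a poset, mutually
inverse morphisms amount to the unit lying below both homs. -/
def IsIsomorphic (A : VCategory.{u, v} V) (x y : A.Obj) : Prop :=
  1 ≤ A.hom x y ∧ 1 ≤ A.hom y x

/-- The adjunction `l ⊣ r` between `V`-categories, in hom-isomorphism form. It is a relation
between object maps; their `V`-functoriality is not part of the definition. -/
def IsAdjunction (A : VCategory.{u, v₁} V) (B : VCategory.{u, v₂} V)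
    (l : A.Obj → B.Obj) (r : B.Obj → A.Obj) : Prop :=
  ∀ a b, B.hom (l a) b = A.hom a (r b)

/-- The exactness condition on a square with sides `p₀`, `p₁`, `f`, `g`: the module
`C(f -, g -)` is the composite of the modules `A(-, p₀ -)` and `B(p₁ -, -)`. Laxness of the square
is not part of the definition. -/
def IsExactSquare (P : VCategory.{u, v₁} V) (A : VCategory.{u, v₂} V) (B : VCategory.{u, v₃} V)
    (C : VCategory.{u, v₄} V) (p₀ : P.Obj → A.Obj) (p₁ : P.Obj → B.Obj)
    (f : A.Obj → C.Obj) (g : B.Obj → C.Obj) : Prop :=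
  ∀ a b, C.hom (f a) (g b) = ⨆ w, A.hom a (p₀ w) * B.hom (p₁ w) b

variable [MulLeftMono V]

theorem one_le_hom_iff_forall_hom_le (A : VCategory.{u, v} V) {x y : A.Obj} :
    1 ≤ A.hom x y ↔ ∀ a, A.hom a x ≤ A.hom a y where
  mp h a := (le_mul_of_one_le_left' h).trans (A.comp_le a x y)
  mpr h := (A.one_le_hom x).trans (h x)

theorem isIsomorphic_iff_forall_hom_eq (A : VCategory.{u, v} V) {x y : A.Obj} :
    A.IsIsomorphic x y ↔ ∀ a, A.hom a x = A.hom a y := by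
  simp only [IsIsomorphic, one_le_hom_iff_forall_hom_le, le_antisymm_iff, forall_and]

theorem iSup_hom_mul_hom {P : VCategory.{u, v₁} V} {A : VCategory.{u, v₂} V}
    {p : P.Obj → A.Obj} (hp : IsVFunctor P A p) (a : A.Obj) (x : P.Obj) :
    ⨆ w, A.hom a (p w) * P.hom w x = A.hom a (p x) := by
  apply le_antisymm
  · refine iSup_le fun w => ?_
    calc A.hom a (p w) * P.hom w x
      _ ≤ A.hom a (p w) * A.hom (p w) (p x) := by gcongr; exact hp w x
      _ = A.hom (p w) (p x) * A.hom a (p w) := mul_comm _ _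
      _ ≤ A.hom a (p x) := A.comp_le a (p w) (p x)
  · exact le_iSup_of_le x (le_mul_of_one_le_right' (P.one_le_hom x))

theorem IsAdjunction.iSup_hom_mul_hom {P : VCategory.{u, v₁} V} {A : VCategory.{u, v₂} V}
    {B : VCategory.{u, v₃} V} {p₀ : P.Obj → A.Obj} {p₁ : P.Obj → B.Obj} {p₁r : B.Obj → P.Obj}
    (hadj : P.IsAdjunction B p₁ p₁r) (hp₀ : IsVFunctor P A p₀) (a : A.Obj) (b : B.Obj) :
    ⨆ w, A.hom a (p₀ w) * B.hom (p₁ w) b = A.hom a (p₀ (p₁r b)) := by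
  simp only [hadj _ b, VCategory.iSup_hom_mul_hom hp₀]

end VCategory

theorem square_exact_iff_mate_iso_general {V : Type u} [CompleteLattice V] [CommMonoid V]
    [MulLeftMono V] {P : VCategory.{u, v₁} V} {A : VCategory.{u, v₂} V}
    {B : VCategory.{u, v₃} V} {C : VCategory.{u, v₄} V}
    {p₀ : P.Obj → A.Obj} {p₁ : P.Obj → B.Obj} {f : A.Obj → C.Obj} (g : B.Obj → C.Obj)
    {fr : C.Obj → A.Obj} {p₁r : B.Obj → P.Obj} (hp₀ : IsVFunctor P A p₀)
    (hadj_f : A.IsAdjunction C f fr) (hadj_p₁ : P.IsAdjunction B p₁ p₁r) :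
    P.IsExactSquare A B C p₀ p₁ f g ↔ ∀ b, A.IsIsomorphic (p₀ (p₁r b)) (fr (g b)) := by
  calc P.IsExactSquare A B C p₀ p₁ f g
    _ ↔ ∀ a b, A.hom a (fr (g b)) = A.hom a (p₀ (p₁r b)) := by
      simp only [VCategory.IsExactSquare, hadj_f _ _, hadj_p₁.iSup_hom_mul_hom hp₀]
    _ ↔ ∀ b a, A.hom a (p₀ (p₁r b)) = A.hom a (fr (g b)) := by
      rw [forall_comm]
      simp only [eq_comm]
    _ ↔ ∀ b, A.IsIsomorphic (p₀ (p₁r b)) (fr (g b)) := by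
      simp only [VCategory.isIsomorphic_iff_forall_hom_eq]

/-- A lax square whose top and left edges are left adjoints is exact iff
`p0 ∘ p1ʳ ≅ fʳ ∘ g`. -/
theorem square_exact_iff_mate_iso {V : Type u} [CompleteLattice V] [CommMonoid V]
    (hV : ∀ (x : V) (s : Set V), x * sSup s = ⨆ y ∈ s, x * y)
    (P A B C : VCategory.{u, v} V)
    (p0 : P.Obj → A.Obj) (p1 : P.Obj → B.Obj) (f : A.Obj → C.Obj) (g : B.Obj → C.Obj)
    (fr : C.Obj → A.Obj) (p1r : B.Obj → P.Obj)
    (hp0 : IsVFunctor P A p0) (hp1 : IsVFunctor P B p1)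
    (hf : IsVFunctor A C f) (hg : IsVFunctor B C g)
    (hfr : IsVFunctor C A fr) (hp1r : IsVFunctor B P p1r)
    (hlax : ∀ w : P.Obj, (1 : V) ≤ C.hom (f (p0 w)) (g (p1 w)))
    (hadj_f : ∀ (a : A.Obj) (c : C.Obj), C.hom (f a) c = A.hom a (fr c))
    (hadj_p1 : ∀ (w : P.Obj) (b : B.Obj), B.hom (p1 w) b = P.hom w (p1r b)) :
    (∀ (a : A.Obj) (b : B.Obj),
        C.hom (f a) (g b) = ⨆ w, A.hom a (p0 w) * B.hom (p1 w) b) ↔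
      (∀ b : B.Obj,
        (1 : V) ≤ A.hom (p0 (p1r b)) (fr (g b)) ∧
        (1 : V) ≤ A.hom (fr (g b)) (p0 (p1r b))) := by
  have : IsQuantale V := isQuantale_of_mul_sSup hV
  exact square_exact_iff_mate_iso_general g hp0 hadj_f hadj_p1
end

section
/- Modules correspond exactly to Kleisli morphisms for the presheaf construction: for V-categories A and B over a commutative quantale V, a function R assigning to each pair (b,a), with b an object of B and a an object of A, an element R(b,a) of V satisfies the module condition B(b',b) ⊗ R(b,a) ⊗ A(a,a') ≤ R(b',a') for all a,a',b,b' if and only if (i) for every object a of A the function b ↦ R(b,a) is a presheaf on B, and (ii) the assignment a ↦ R(−,a) is a V-functor from A to the presheaf V-category L B, i.e. A(a,a') ≤ ⋀_b [R(b,a), R(b,a')] for all objects a,a' of A. -/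
universe u v w

/-!
The unit of `A` lets one discard the `A`-action from the module condition, and the unit of `B` the
`B`-action, so a module is the same as a left action of `B` and a right action of `A`. The first
says that each `R(-, a)` is a presheaf on `B`; the adjunction `x ⊗ - ⊣ [x, -]` turns the second,
`R(b, a) ⊗ A(a, a') ≤ R(b, a')`, into functoriality of `a ↦ R(-, a)`.
-/

section InternalHom

variable {V : Type u} [CompleteLattice V] [CommMonoid V]

theorem isQuantale_of_mul_sSup_distrib
    (h : ∀ (x : V) (s : Set V), x * sSup s = ⨆ y ∈ s, x * y) : IsQuantale V where
  mul_sSup_distrib := h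
  sSup_mul_distrib s y := by simpa only [mul_comm y] using h y s

variable [IsQuantale V]

theorem le_ihom_iff {x y z : V} : z ≤ ihom x y ↔ x * z ≤ y :=
  Quantale.rightMulResiduation_le_iff_mul_le

theorem mul_ihom_le (x y : V) : x * ihom x y ≤ y :=
  le_ihom_iff.mp le_rfl

theorem one_le_ihom_self (x : V) : 1 ≤ ihom x x :=
  le_ihom_iff.mpr (mul_one x).le

theorem ihom_mul_ihom_le (x y z : V) : ihom y z * ihom x y ≤ ihom x z :=
  le_ihom_iff.mpr <| calc
    x * (ihom y z * ihom x y) = x * ihom x y * ihom y z := by rw [mul_comm (ihom y z), mul_assoc]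
    _ ≤ y * ihom y z := mul_le_mul_left (mul_ihom_le x y) _
    _ ≤ z := mul_ihom_le y z

end InternalHom

section Presheaf

variable {V : Type u} [CompleteLattice V] [CommMonoid V] [IsQuantale V]

/-- The presheaf `V`-category `L A`, with `L A(F, G) = ⋀ₐ [F a, G a]`. Its objects form a subtype,
so `F.1` is the function underlying a presheaf `F`. -/
def presheafVCategory (A : VCategory.{u, v} V) : VCategory.{u, max u v} V where
  Obj := {F : A.Obj → V // IsPresheaf A F}
  hom F G := ⨅ a, ihom (F.1 a) (G.1 a)
  one_le_hom F := le_iInf fun a => one_le_ihom_self (F.1 a)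
  comp_le F G H := le_iInf fun a =>
    (mul_le_mul' (iInf_le _ a) (iInf_le _ a)).trans (ihom_mul_ihom_le (F.1 a) (G.1 a) (H.1 a))

theorem le_presheafVCategory_hom_iff {A : VCategory.{u, v} V} {F G : (presheafVCategory A).Obj}
    {z : V} : z ≤ (presheafVCategory A).hom F G ↔ ∀ a, F.1 a * z ≤ G.1 a :=
  le_iInf_iff.trans (forall_congr' fun _ => le_ihom_iff)

theorem isVFunctor_presheafVCategory_iff {A : VCategory.{u, v} V} {B : VCategory.{u, w} V}
    {f : A.Obj → (presheafVCategory B).Obj} :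
    IsVFunctor A (presheafVCategory B) f ↔
      ∀ a a' b, (f a).1 b * A.hom a a' ≤ (f a').1 b :=
  forall₂_congr fun _ _ => le_presheafVCategory_hom_iff

end Presheaf

section Module

variable {V : Type u} [CompleteLattice V] [CommMonoid V]
  {A : VCategory.{u, v} V} {B : VCategory.{u, w} V} {R : B.Obj → A.Obj → V}

theorem IsModule.isPresheaf [MulLeftMono V] (hR : IsModule A B R) (a : A.Obj) :
    IsPresheaf B (fun b => R b a) := fun b b' => calc
  R b a * B.hom b' b = B.hom b' b * R b a := mul_comm _ _
  _ ≤ B.hom b' b * R b a * A.hom a a := le_mul_of_one_le_right' (A.one_le_hom a)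
  _ ≤ R b' a := hR a a b b'

theorem IsModule.mul_hom_le [MulLeftMono V] (hR : IsModule A B R) (a a' : A.Obj) (b : B.Obj) :
    R b a * A.hom a a' ≤ R b a' := calc
  R b a * A.hom a a' ≤ B.hom b b * (R b a * A.hom a a') := le_mul_of_one_le_left' (B.one_le_hom b)
  _ = B.hom b b * R b a * A.hom a a' := (mul_assoc _ _ _).symm
  _ ≤ R b a' := hR a a' b b

theorem isModule_iff_isPresheaf_and_mul_hom_le [MulLeftMono V] :
    IsModule A B R ↔
      (∀ a, IsPresheaf B (fun b => R b a)) ∧ ∀ a a' b, R b a * A.hom a a' ≤ R b a' := by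
  refine ⟨fun hR => ⟨hR.isPresheaf, hR.mul_hom_le⟩, fun ⟨hB, hA⟩ a a' b b' => ?_⟩
  calc
    B.hom b' b * R b a * A.hom a a' = R b a * A.hom a a' * B.hom b' b := by
      rw [mul_assoc, mul_comm]
    _ ≤ R b a' * B.hom b' b := mul_le_mul_left (hA a a' b) _
    _ ≤ R b' a' := hB a' b b'

theorem isModule_iff_exists_isVFunctor_presheafVCategory [IsQuantale V] :
    IsModule A B R ↔ ∃ hB : ∀ a, IsPresheaf B (fun b => R b a),
      IsVFunctor A (presheafVCategory B) (fun a => ⟨fun b => R b a, hB a⟩) :=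
  isModule_iff_isPresheaf_and_mul_hom_le.trans
    ⟨fun ⟨hB, hA⟩ => ⟨hB, isVFunctor_presheafVCategory_iff.mpr hA⟩,
      fun ⟨hB, hA⟩ => ⟨hB, isVFunctor_presheafVCategory_iff.mp hA⟩⟩

end Module

/-- Modules correspond exactly to Kleisli morphisms for the presheaf construction. -/
theorem module_iff_kleisli {V : Type u} [CompleteLattice V] [CommMonoid V]
    (hV : ∀ (x : V) (s : Set V), x * sSup s = ⨆ y ∈ s, x * y)
    (A B : VCategory.{u, v} V)
    (R : B.Obj → A.Obj → V) :
    IsModule A B R ↔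
      ((∀ a : A.Obj, IsPresheaf B (fun b => R b a)) ∧
        (∀ a a' : A.Obj, A.hom a a' ≤ ⨅ b, ihom (R b a) (R b a'))) := by
  have : IsQuantale V := isQuantale_of_mul_sSup_distrib hV
  exact isModule_iff_exists_isVFunctor_presheafVCategory.trans
    ⟨fun ⟨hB, hA⟩ => ⟨hB, hA⟩, fun ⟨hB, hA⟩ => ⟨hB, hA⟩⟩
end
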